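/- If a = b is a formula of Λ (a and b terms of the same type) that is not provable in Λ, then in Λ extended with a = b as a new axiom schema, every formula c = d (with c and d terms of the same type) is provable. -/

import Mathlib

set_option autoImplicit false

/-- Simple types over a set `ν` of atomic types. -/
inductive Ty (ν : Type) : Type
  | atom : ν → Ty ν
  | arrow : Ty ν → Ty ν → Ty ν

/-- A typing context: the (types of the) free variables. -/
abbrev Ctx (ν : Type) : Type := List (Ty ν)

/-- Typed de Bruijn variables. -/
inductive Var {ν : Type} : Ctx ν → Ty ν → Type
  | vz {Γ : Ctx ν} {A : Ty ν} : Var (A :: Γ) A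
  | vs {Γ : Ctx ν} {A B : Ty ν} : Var Γ A → Var (B :: Γ) A

/-- Typed terms of the simply typed lambda calculus Λ. -/
inductive Tm {ν : Type} : Ctx ν → Ty ν → Type
  | var {Γ : Ctx ν} {A : Ty ν} : Var Γ A → Tm Γ A
  | app {Γ : Ctx ν} {A B : Ty ν} : Tm Γ (Ty.arrow A B) → Tm Γ A → Tm Γ B
  | lam {Γ : Ctx ν} {A B : Ty ν} : Tm (A :: Γ) B → Tm Γ (Ty.arrow A B)

/-- Renamings between contexts. -/
def Ren {ν : Type} (Γ Δ : Ctx ν) : Type := ∀ A : Ty ν, Var Γ A → Var Δ A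

def Ren.ext {ν : Type} {Γ Δ : Ctx ν} (ρ : Ren Γ Δ) (A : Ty ν) : Ren (A :: Γ) (A :: Δ) :=
  fun _ v => match v with
  | .vz => .vz
  | .vs w => .vs (ρ _ w)

def Tm.rename {ν : Type} : ∀ {Γ Δ : Ctx ν} {A : Ty ν}, Ren Γ Δ → Tm Γ A → Tm Δ A
  | _, _, _, ρ, .var v => .var (ρ _ v)
  | _, _, _, ρ, .app f a => .app (f.rename ρ) (a.rename ρ)
  | _, _, _, ρ, .lam b => .lam (b.rename (ρ.ext _))

/-- Simultaneous substitutions. -/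
def Subst {ν : Type} (Γ Δ : Ctx ν) : Type := ∀ A : Ty ν, Var Γ A → Tm Δ A

def Subst.ext {ν : Type} {Γ Δ : Ctx ν} (σ : Subst Γ Δ) (A : Ty ν) :
    ∀ B : Ty ν, Var (A :: Γ) B → Tm (A :: Δ) B
  | _, .vz => .var .vz
  | _, .vs w => (σ _ w).rename (fun _ => Var.vs)

def Tm.subst {ν : Type} : ∀ {Γ Δ : Ctx ν} {A : Ty ν}, Subst Γ Δ → Tm Γ A → Tm Δ A
  | _, _, _, σ, .var v => σ _ v
  | _, _, _, σ, .app f a => .app (f.subst σ) (a.subst σ)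
  | _, _, _, σ, .lam b => .lam (b.subst (Subst.ext σ _))

/-- Extending a substitution with a term for the last variable. -/
def Subst.cons {ν : Type} {Γ Δ : Ctx ν} {A : Ty ν} (b : Tm Δ A) (σ : Subst Γ Δ) :
    ∀ B : Ty ν, Var (A :: Γ) B → Tm Δ B
  | _, .vz => b
  | _, .vs w => σ _ w

/-- Substitution of a single term for the last variable: `a[b/x]`. -/
def Tm.subst1 {ν : Type} {Γ : Ctx ν} {A B : Ty ν} (a : Tm (A :: Γ) B) (b : Tm Γ A) : Tm Γ B :=
  a.subst (Subst.cons b (fun _ v => .var v))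

/-- The theory Λ of βη-equality. -/
inductive Eqv {ν : Type} : ∀ {Γ : Ctx ν} {A : Ty ν}, Tm Γ A → Tm Γ A → Prop
  | refl {Γ : Ctx ν} {A : Ty ν} (a : Tm Γ A) : Eqv a a
  | symm {Γ : Ctx ν} {A : Ty ν} {a b : Tm Γ A} : Eqv a b → Eqv b a
  | trans {Γ : Ctx ν} {A : Ty ν} {a b c : Tm Γ A} : Eqv a b → Eqv b c → Eqv a c
  | congApp {Γ : Ctx ν} {A B : Ty ν} {f g : Tm Γ (Ty.arrow A B)} {a b : Tm Γ A} :
      Eqv f g → Eqv a b → Eqv (.app f a) (.app g b)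
  | congLam {Γ : Ctx ν} {A B : Ty ν} {a b : Tm (A :: Γ) B} :
      Eqv a b → Eqv (.lam a) (.lam b)
  | beta {Γ : Ctx ν} {A B : Ty ν} (a : Tm (A :: Γ) B) (b : Tm Γ A) :
      Eqv (.app (.lam a) b) (a.subst1 b)
  | eta {Γ : Ctx ν} {A B : Ty ν} (a : Tm Γ (Ty.arrow A B)) :
      Eqv (.lam (.app (a.rename (fun _ => Var.vs)) (.var .vz))) a

/-- Substitution of types for the atomic types, on types. -/
def Ty.substA {ν : Type} (σ : ν → Ty ν) : Ty ν → Ty ν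
  | .atom v => σ v
  | .arrow A B => .arrow (A.substA σ) (B.substA σ)

def Var.substA {ν : Type} (σ : ν → Ty ν) :
    ∀ {Γ : Ctx ν} {A : Ty ν}, Var Γ A → Var (Γ.map (Ty.substA σ)) (A.substA σ)
  | _, _, .vz => .vz
  | _, _, .vs v => .vs (v.substA σ)

/-- Substitution of types for the atomic types, on terms: type-instances. -/
def Tm.substA {ν : Type} (σ : ν → Ty ν) :
    ∀ {Γ : Ctx ν} {A : Ty ν}, Tm Γ A → Tm (Γ.map (Ty.substA σ)) (A.substA σ)
  | _, _, .var v => .var (v.substA σ)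
  | _, _, .app f a => .app (f.substA σ) (a.substA σ)
  | _, _, .lam b => .lam (b.substA σ)

/-- `Ty.arrs [A₁, …, Aₘ] B = Aₘ → (… → (A₁ → B))` : the type of `λx₁…xₘ.a`. -/
def Ty.arrs {ν : Type} : Ctx ν → Ty ν → Ty ν
  | [], B => B
  | A :: Γ, B => Ty.arrs Γ (Ty.arrow A B)

/-- λ-abstracting all the free variables of a term. -/
def Tm.lamAll {ν : Type} : ∀ {Γ : Ctx ν} {A : Ty ν}, Tm Γ A → Tm [] (Ty.arrs Γ A)
  | [], _, a => a
  | _ :: Γ, _, a => Tm.lamAll (Γ := Γ) (Tm.lam a)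

/-- `Ty.arrsR [B₁, …, Bₙ] C = B₁ → (… → (Bₙ → C))`. -/
def Ty.arrsR {ν : Type} : List (Ty ν) → Ty ν → Ty ν
  | [], C => C
  | B :: Bs, C => Ty.arrow B (Ty.arrsR Bs C)

/-- A list of terms `h₁ : B₁, …, hₙ : Bₙ` in context `Δ`. -/
inductive HList {ν : Type} (Δ : Ctx ν) : List (Ty ν) → Type
  | nil : HList Δ []
  | cons {B : Ty ν} {Bs : List (Ty ν)} : Tm Δ B → HList Δ Bs → HList Δ (B :: Bs)

/-- Iterated application `t h₁ … hₙ`. -/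
def HList.apps {ν : Type} {Δ : Ctx ν} :
    ∀ {Bs : List (Ty ν)} {C : Ty ν}, HList Δ Bs → Tm Δ (Ty.arrsR Bs C) → Tm Δ C
  | _, _, .nil, t => t
  | _, _, .cons h hs, t => HList.apps hs (t.app h)

/-- Iterated application `t h₁ … hₙ`. -/
def Tm.apps {ν : Type} {Δ : Ctx ν} {Bs : List (Ty ν)} {C : Ty ν}
    (t : Tm Δ (Ty.arrsR Bs C)) (hs : HList Δ Bs) : Tm Δ C :=
  hs.apps t

/-- Weakening of a closed term into an arbitrary context. -/
def Var.elim0 {ν : Type} {A : Ty ν} {C : Sort*} : Var ([] : Ctx ν) A → C :=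
  fun v => nomatch v

def Tm.wk {ν : Type} {Δ : Ctx ν} {A : Ty ν} (t : Tm ([] : Ctx ν) A) : Tm Δ A :=
  t.rename (fun _ v => v.elim0)

/--
The theory Λ of βη-equality extended with `a₀ = b₀` as a new axiom schema: atomic types
are treated as variables, so every pair of corresponding type-instances of `a₀` and `b₀`
is an axiom (and, the free variables of an axiom being ordinary variables, so is every
substitution instance of such a pair, which is anyhow derivable by (β) and replacement).
-/
inductive EqvExt {ν : Type} {Γ₀ : Ctx ν} {A₀ : Ty ν} (a₀ b₀ : Tm Γ₀ A₀) :
    ∀ {Γ : Ctx ν} {A : Ty ν}, Tm Γ A → Tm Γ A → Prop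
  | refl {Γ : Ctx ν} {A : Ty ν} (a : Tm Γ A) : EqvExt a₀ b₀ a a
  | symm {Γ : Ctx ν} {A : Ty ν} {a b : Tm Γ A} : EqvExt a₀ b₀ a b → EqvExt a₀ b₀ b a
  | trans {Γ : Ctx ν} {A : Ty ν} {a b c : Tm Γ A} :
      EqvExt a₀ b₀ a b → EqvExt a₀ b₀ b c → EqvExt a₀ b₀ a c
  | congApp {Γ : Ctx ν} {A B : Ty ν} {f g : Tm Γ (Ty.arrow A B)} {a b : Tm Γ A} :
      EqvExt a₀ b₀ f g → EqvExt a₀ b₀ a b → EqvExt a₀ b₀ (.app f a) (.app g b)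
  | congLam {Γ : Ctx ν} {A B : Ty ν} {a b : Tm (A :: Γ) B} :
      EqvExt a₀ b₀ a b → EqvExt a₀ b₀ (.lam a) (.lam b)
  | beta {Γ : Ctx ν} {A B : Ty ν} (a : Tm (A :: Γ) B) (b : Tm Γ A) :
      EqvExt a₀ b₀ (.app (.lam a) b) (a.subst1 b)
  | eta {Γ : Ctx ν} {A B : Ty ν} (a : Tm Γ (Ty.arrow A B)) :
      EqvExt a₀ b₀ (.lam (.app (a.rename (fun _ => Var.vs)) (.var .vz))) a
  | ax (σ : ν → Ty ν) {Δ : Ctx ν} (su : Subst (Γ₀.map (Ty.substA σ)) Δ) :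
      EqvExt a₀ b₀ ((a₀.substA σ).subst su) ((b₀.substA σ).subst su)

/-!
The argument normalizes by evaluation in the full type structure over families of raw terms.
In that model every term evaluates to a family from which its normal form can be read off, so
terms with the same value are provably equal.

If `a` and `b` are not provably equal, the two raw terms that tell them apart have only finitely
many subterms between them. Remembering only where a family agrees with one of these subterms gives
a finite quotient, with `n` classes, that still separates `a` from `b` and respects the operations
used in the model. Instantiate every atomic type by `C → ⋯ → C → C` with `n` arguments, and let a
term of this type that selects its `i`-th argument stand for the `i`-th class. The operations of the
finite quotient are then definable, whence so is the passage from (an instance of) a term to the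
class of its value. Applied to the instances of `a` and `b` this yields two different selectors, and
these can be made to select `c` and `d` respectively.
-/

section

variable {ν : Type} {Γ Δ Θ : Ctx ν} {A B C : Ty ν}

/-! ### Renaming and substitution -/

theorem Ren.ext_comp (ρ : Ren Γ Δ) (τ : Ren Δ Θ) :
    (fun B v => τ.ext A B (ρ.ext A B v)) = Ren.ext (fun B v => τ B (ρ B v)) A := by
  funext B v; cases v <;> rfl

theorem Tm.rename_rename (t : Tm Γ A) (ρ : Ren Γ Δ) (τ : Ren Δ Θ) :
    (t.rename ρ).rename τ = t.rename (fun B v => τ B (ρ B v)) := by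
  induction t generalizing Δ Θ with
  | var v => rfl
  | app f a ihf iha => simp only [Tm.rename, ihf, iha]
  | lam b ih => simp only [Tm.rename, ih, Ren.ext_comp]

theorem Tm.weaken_rename_ext (t : Tm Γ B) (ρ : Ren Γ Δ) :
    (t.rename fun _ => Var.vs).rename (ρ.ext A) = (t.rename ρ).rename fun _ => Var.vs :=
  (t.rename_rename _ _).trans (t.rename_rename ρ fun _ => Var.vs).symm

theorem Subst.ext_comp_ren (ρ : Ren Γ Δ) (s : Subst Δ Θ) :
    (fun B v => Subst.ext s A B (ρ.ext A B v)) = Subst.ext (fun B v => s B (ρ B v)) A := by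
  funext B v; cases v <;> rfl

theorem Tm.subst_of_rename (t : Tm Γ A) (ρ : Ren Γ Δ) (s : Subst Δ Θ) :
    (t.rename ρ).subst s = t.subst (fun B v => s B (ρ B v)) := by
  induction t generalizing Δ Θ with
  | var v => rfl
  | app f a ihf iha => simp only [Tm.rename, Tm.subst, ihf, iha]
  | lam b ih =>
    exact congrArg Tm.lam ((ih _ _).trans (congrArg (b.subst ·) (Subst.ext_comp_ren ρ s)))

theorem Subst.rename_ext (s : Subst Γ Δ) (ρ : Ren Δ Θ) :
    (fun B v => (Subst.ext s A B v).rename (ρ.ext A)) =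
      Subst.ext (fun B v => (s B v).rename ρ) A := by
  funext B v
  cases v with
  | vz => rfl
  | vs w => exact (s B w).weaken_rename_ext ρ

theorem Tm.rename_of_subst (t : Tm Γ A) (s : Subst Γ Δ) (ρ : Ren Δ Θ) :
    (t.subst s).rename ρ = t.subst (fun B v => (s B v).rename ρ) := by
  induction t generalizing Δ Θ with
  | var v => rfl
  | app f a ihf iha => simp only [Tm.rename, Tm.subst, ihf, iha]
  | lam b ih => exact congrArg Tm.lam ((ih _ _).trans (congrArg (b.subst ·) (Subst.rename_ext s ρ)))

theorem Subst.ext_comp (s : Subst Γ Δ) (r : Subst Δ Θ) :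
    (fun B v => (Subst.ext s A B v).subst (Subst.ext r A)) =
      Subst.ext (fun B v => (s B v).subst r) A := by
  funext B v
  cases v with
  | vz => rfl
  | vs w => exact ((s B w).subst_of_rename _ _).trans ((s B w).rename_of_subst _ _).symm

theorem Tm.subst_subst (t : Tm Γ A) (s : Subst Γ Δ) (r : Subst Δ Θ) :
    (t.subst s).subst r = t.subst (fun B v => (s B v).subst r) := by
  induction t generalizing Δ Θ with
  | var v => rfl
  | app f a ihf iha => simp only [Tm.subst, ihf, iha]
  | lam b ih => exact congrArg Tm.lam ((ih _ _).trans (congrArg (b.subst ·) (Subst.ext_comp s r)))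

theorem Subst.ext_var : Subst.ext (fun _ v => .var v : Subst Γ Γ) A = fun _ v => .var v := by
  funext B v; cases v <;> rfl

theorem Tm.subst_var (t : Tm Γ A) : t.subst (fun _ v => .var v) = t := by
  induction t with
  | var v => rfl
  | app f a ihf iha => simp only [Tm.subst, ihf, iha]
  | lam b ih => simp only [Tm.subst, Subst.ext_var, ih]

theorem Ren.ext_id : Ren.ext (fun _ v => v : Ren Γ Γ) A = fun _ v => v := by
  funext B v; cases v <;> rfl

theorem Tm.rename_id (t : Tm Γ A) : t.rename (fun _ v => v) = t := by
  induction t with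
  | var v => rfl
  | app f a ihf iha => simp only [Tm.rename, ihf, iha]
  | lam b ih => simp only [Tm.rename, Ren.ext_id, ih]

theorem Tm.weaken_subst_cons (t : Tm Γ A) (u : Tm Δ B) (s : Subst Γ Δ) :
    (t.rename fun _ => Var.vs).subst (Subst.cons u s) = t.subst s :=
  t.subst_of_rename _ _

theorem Tm.subst_ext_subst1 (t : Tm (A :: Γ) B) (s : Subst Γ Δ) (u : Tm Δ A) :
    (t.subst (Subst.ext s A)).subst1 u = t.subst (Subst.cons u s) := by
  refine (t.subst_subst _ _).trans (congrArg (t.subst ·) ?_)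
  funext B v
  cases v with
  | vz => rfl
  | vs w => exact ((s B w).weaken_subst_cons u _).trans (s B w).subst_var

theorem Tm.rename_subst1 (t : Tm (A :: Γ) B) (u : Tm Γ A) (ρ : Ren Γ Δ) :
    (t.subst1 u).rename ρ = (t.rename (ρ.ext A)).subst1 (u.rename ρ) := by
  refine (t.rename_of_subst _ _).trans (.trans (congrArg (t.subst ·) ?_)
    (t.subst_of_rename _ _).symm)
  funext B v
  cases v <;> rfl

theorem Eqv.of_eq {t u : Tm Γ A} (h : t = u) : Eqv t u := h ▸ .refl t

theorem Eqv.rename {t u : Tm Γ A} (h : Eqv t u) (ρ : Ren Γ Δ) :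
    Eqv (t.rename ρ) (u.rename ρ) := by
  induction h generalizing Δ with
  | refl a => exact .refl _
  | symm _ ih => exact .symm (ih ρ)
  | trans _ _ ih₁ ih₂ => exact .trans (ih₁ ρ) (ih₂ ρ)
  | congApp _ _ ih₁ ih₂ => exact .congApp (ih₁ ρ) (ih₂ ρ)
  | congLam _ ih => exact .congLam (ih _)
  | beta a b => rw [Tm.rename_subst1]; exact .beta _ _
  | eta a => simp only [Tm.rename, Tm.weaken_rename_ext]; exact .eta _

theorem Eqv.beta_subst (b : Tm (A :: Γ) B) (s : Subst Γ Δ) (u : Tm Δ A) :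
    Eqv (.app ((Tm.lam b).subst s) u) (b.subst (Subst.cons u s)) :=
  .trans (.beta _ _) (.of_eq (b.subst_ext_subst1 s u))

theorem Eqv.toEqvExt {a₀ b₀ : Tm Θ C} {t u : Tm Γ A} (h : Eqv t u) : EqvExt a₀ b₀ t u := by
  induction h with
  | refl a => exact .refl a
  | symm _ ih => exact .symm ih
  | trans _ _ ih₁ ih₂ => exact .trans ih₁ ih₂
  | congApp _ _ ih₁ ih₂ => exact .congApp ih₁ ih₂
  | congLam _ ih => exact .congLam ih
  | beta a b => exact .beta a b
  | eta a => exact .eta a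

/-! ### Raw terms -/

/-- Raw terms whose variables are de Bruijn levels, so that weakening a typed term does not change
its raw term. Applications record the type of the argument, without which distinct typed terms
could have the same raw term. -/
inductive Raw (ν : Type) : Type
  | var : ℕ → Raw ν
  | app : Ty ν → Raw ν → Raw ν → Raw ν
  | lam : Raw ν → Raw ν

/-- The de Bruijn level of a variable: its position counted from the outer end of the context. -/
def Var.level : ∀ {Γ : Ctx ν} {A : Ty ν}, Var Γ A → ℕ
  | _ :: Γ, _, .vz => Γ.length
  | _, _, .vs w => w.level

theorem Var.level_lt_length (v : Var Γ A) : v.level < Γ.length := by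
  induction v with
  | vz => exact Nat.lt_succ_self _
  | vs w ih => exact Nat.lt_succ_of_lt ih

theorem Var.level_injective : Function.Injective (Var.level : Var Γ A → ℕ) := by
  intro v w h
  induction v with
  | vz =>
    cases w with
    | vz => rfl
    | vs w => exact absurd h w.level_lt_length.ne'
  | vs v ih =>
    cases w with
    | vz => exact absurd h v.level_lt_length.ne
    | vs w => rw [ih h]

/-- The raw term underlying a typed term. -/
def Tm.raw : ∀ {Γ : Ctx ν} {A : Ty ν}, Tm Γ A → Raw ν
  | _, _, .var v => .var v.level
  | _, _, .app (A := A) f a => .app A f.raw a.raw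
  | _, _, .lam b => .lam b.raw

theorem Tm.raw_injective : Function.Injective (Tm.raw : Tm Γ A → Raw ν) := by
  intro t u h
  induction t with
  | var v =>
    cases u with
    | var w => rw [Var.level_injective (Raw.var.inj h)]
    | _ => cases h
  | app f a ihf iha =>
    cases u with
    | app g b =>
      obtain ⟨rfl, hf, ha⟩ := Raw.app.inj h
      rw [ihf hf, iha ha]
    | _ => cases h
  | lam b ih =>
    cases u with
    | lam c => rw [ih (Raw.lam.inj h)]
    | _ => cases h

/-- Raw terms depending on the length of the context they are read in. These interpret the atomic
types. -/
abbrev Fam (ν : Type) : Type := ℕ → Raw ν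

/-- The family of the variable of a given level. -/
def Fam.var (k : ℕ) : Fam ν := fun _ => .var k

/-- Pointwise application, to an argument of type `A`. -/
def Fam.app (A : Ty ν) (x y : Fam ν) : Fam ν := fun i => .app A (x i) (y i)

/-- Overwrites the `k`-th entry of `x` by the abstraction of `y`. Abstraction of a whole family is
thereby reached in finitely many steps as far as a finite congruence can see. -/
def Fam.updateLam (k : ℕ) (x y : Fam ν) : Fam ν := Function.update x k (.lam (y (k + 1)))

/-! ### Normalization by evaluation -/

/-- The full type structure over families of raw terms. -/
def Ty.Sem : Ty ν → Type
  | .atom _ => Fam ν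
  | .arrow A B => A.Sem → B.Sem

/-- Environments: values for the variables of a context. -/
def Env (Γ : Ctx ν) : Type := ∀ A : Ty ν, Var Γ A → A.Sem

/-- Extending an environment with a value for the last variable. -/
def Env.cons (x : A.Sem) (η : Env Γ) : Env (A :: Γ)
  | _, .vz => x
  | _, .vs w => η _ w

/-- The value of a term. -/
def Tm.eval : ∀ {Γ : Ctx ν} {A : Ty ν}, Tm Γ A → Env Γ → A.Sem
  | _, _, .var v, η => η _ v
  | _, _, .app (A := A) (B := B) f a, η => (f.eval η : A.Sem → B.Sem) (a.eval η)
  | _, _, .lam b, η => fun x => b.eval (η.cons x)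

mutual

/-- Reflection of families, thought of as neutral terms of type `A`, into the model. -/
def Ty.reflect : (A : Ty ν) → Fam ν → A.Sem
  | .atom _, x => x
  | .arrow A B, x => fun g => B.reflect (.app A x (A.reify g))

/-- Reification of elements of the model as families of normal forms of type `A`. -/
def Ty.reify : (A : Ty ν) → A.Sem → Fam ν
  | .atom _, x => x
  | .arrow A B, g => fun i => .lam (B.reify (g (A.reflect (.var i))) (i + 1))

end

/-- The environment reflecting each variable as itself. -/
def Env.generic (Γ : Ctx ν) : Env Γ := fun A v => A.reflect (.var v.level)

/-- The normal form of a term, as computed by evaluation. -/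
def Tm.nf (t : Tm Γ A) : Fam ν := A.reify (t.eval (Env.generic Γ))

/-- Renamings that preserve de Bruijn levels: weakenings by more recent variables. -/
def Ren.PreservesLevel (ρ : Ren Γ Δ) : Prop := ∀ (A : Ty ν) (v : Var Γ A), (ρ A v).level = v.level

theorem Ren.PreservesLevel.comp {ρ : Ren Γ Δ} {τ : Ren Δ Θ} (hτ : τ.PreservesLevel)
    (hρ : ρ.PreservesLevel) : Ren.PreservesLevel (fun B v => τ B (ρ B v)) :=
  fun _ _ => (hτ _ _).trans (hρ _ _)

/-- In every larger context, `t` is provably equal to a term whose raw term is given by the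
family `x`. -/
def Tm.NormalizesTo (t : Tm Γ A) (x : Fam ν) : Prop :=
  ∀ ⦃Δ : Ctx ν⦄ (ρ : Ren Γ Δ), ρ.PreservesLevel →
    ∃ u : Tm Δ A, Eqv (t.rename ρ) u ∧ u.raw = x Δ.length

/-- The Kripke logical relation between terms and elements of the model that is `NormalizesTo` at
atomic types. -/
def Tm.Computes : ∀ {A : Ty ν} {Γ : Ctx ν}, Tm Γ A → A.Sem → Prop
  | .atom _, _, t, x => t.NormalizesTo x
  | .arrow A _, Γ, t, g => ∀ ⦃Δ : Ctx ν⦄ (ρ : Ren Γ Δ), ρ.PreservesLevel →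
      ∀ (u : Tm Δ A) (x : A.Sem), u.Computes x → (Tm.app (t.rename ρ) u).Computes (g x)

theorem Tm.NormalizesTo.exists_eqv {t : Tm Γ A} {x : Fam ν} (h : t.NormalizesTo x) :
    ∃ u : Tm Γ A, Eqv t u ∧ u.raw = x Γ.length := by
  simpa only [Tm.rename_id] using h (fun _ v => v) fun _ _ => rfl

theorem Tm.NormalizesTo.rename {t : Tm Γ A} {x : Fam ν} (h : t.NormalizesTo x) {ρ : Ren Γ Δ}
    (hρ : ρ.PreservesLevel) : (t.rename ρ).NormalizesTo x := by
  intro Θ τ hτ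
  rw [Tm.rename_rename]
  exact h _ (hτ.comp hρ)

theorem Tm.normalizesTo_var (v : Var Γ A) : (Tm.var v).NormalizesTo (Fam.var v.level) :=
  fun _ ρ hρ => ⟨.var (ρ A v), .refl _, congrArg Raw.var (hρ A v)⟩

theorem Tm.NormalizesTo.app {t : Tm Γ (.arrow A B)} {u : Tm Γ A} {x y : Fam ν}
    (ht : t.NormalizesTo x) (hu : u.NormalizesTo y) :
    (Tm.app t u).NormalizesTo (Fam.app A x y) := by
  intro Δ ρ hρ
  obtain ⟨t', ht', htx⟩ := ht ρ hρ
  obtain ⟨u', hu', huy⟩ := hu ρ hρ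
  exact ⟨.app t' u', .congApp ht' hu', by rw [Tm.raw, htx, huy]; rfl⟩

theorem Tm.Computes.rename {t : Tm Γ A} {x : A.Sem} (h : t.Computes x) {ρ : Ren Γ Δ}
    (hρ : ρ.PreservesLevel) : (t.rename ρ).Computes x := by
  cases A with
  | atom p => exact Tm.NormalizesTo.rename h hρ
  | arrow A B =>
    intro Θ τ hτ u y hu
    rw [Tm.rename_rename]
    exact h _ (hτ.comp hρ) u y hu

theorem Tm.Computes.congr {t u : Tm Γ A} {x : A.Sem} (h : t.Computes x) (e : Eqv t u) :
    u.Computes x := by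
  induction A generalizing Γ with
  | atom p =>
    intro Δ ρ hρ
    obtain ⟨t', ht', hx⟩ := h ρ hρ
    exact ⟨t', .trans (.symm (e.rename ρ)) ht', hx⟩
  | arrow A B _ ihB =>
    intro Δ ρ hρ v y hv
    exact ihB (h ρ hρ v y hv) (.congApp (e.rename ρ) (.refl v))

theorem Tm.Computes.app {t : Tm Γ (.arrow A B)} {u : Tm Γ A} {g : A.Sem → B.Sem} {x : A.Sem}
    (ht : t.Computes (A := .arrow A B) g) (hu : u.Computes x) : (Tm.app t u).Computes (g x) := by
  simpa only [Tm.rename_id] using ht (fun _ v => v) (fun _ _ => rfl) u x hu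

theorem Tm.computes_reflect_and_normalizesTo_reify (A : Ty ν) :
    (∀ {Γ : Ctx ν} {t : Tm Γ A} {x : Fam ν}, t.NormalizesTo x → t.Computes (A.reflect x)) ∧
    (∀ {Γ : Ctx ν} {t : Tm Γ A} {x : A.Sem}, t.Computes x → t.NormalizesTo (A.reify x)) := by
  induction A with
  | atom p => exact ⟨id, id⟩
  | arrow A B ihA ihB =>
    obtain ⟨computes_reflect_A, normalizesTo_reify_A⟩ := ihA
    obtain ⟨computes_reflect_B, normalizesTo_reify_B⟩ := ihB
    refine ⟨fun ht _ ρ hρ u g hu => ?_, fun {Γ t g} ht Δ ρ hρ => ?_⟩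
    · exact computes_reflect_B ((ht.rename hρ).app (normalizesTo_reify_A hu))
    · have var_computes : (Tm.var .vz : Tm (A :: Δ) A).Computes (A.reflect (.var Δ.length)) :=
        computes_reflect_A (Tm.normalizesTo_var .vz)
      have app_computes :=
        Tm.Computes.rename ht hρ (fun _ => Var.vs) (fun _ _ => rfl) _ _ var_computes
      obtain ⟨b, hb, hraw⟩ := (normalizesTo_reify_B app_computes).exists_eqv
      exact ⟨.lam b, .trans (.symm (.eta _)) (.congLam hb), congrArg Raw.lam hraw⟩

theorem Tm.computes_eval (t : Tm Γ A) {s : Subst Γ Δ} {η : Env Γ}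
    (h : ∀ (B : Ty ν) (v : Var Γ B), (s B v).Computes (η B v)) :
    (t.subst s).Computes (t.eval η) := by
  induction t generalizing Δ with
  | var v => exact h _ v
  | app f a ihf iha => exact Tm.Computes.app (ihf h) (iha h)
  | lam b ih =>
    intro Θ ρ hρ u x hu
    rw [Tm.rename_of_subst]
    refine Tm.Computes.congr (ih fun B v => ?_) (.symm (.beta_subst b _ u))
    cases v with
    | vz => exact hu
    | vs w => exact (h _ w).rename hρ

theorem Tm.normalizesTo_nf (t : Tm Γ A) : t.NormalizesTo t.nf := by
  have h := t.computes_eval (s := fun _ v => .var v) (η := Env.generic Γ) fun B v =>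
    (Tm.computes_reflect_and_normalizesTo_reify B).1 (Tm.normalizesTo_var v)
  rw [Tm.subst_var] at h
  exact (Tm.computes_reflect_and_normalizesTo_reify A).2 h

theorem Eqv.of_nf_eq {a b : Tm Γ A} (h : a.nf = b.nf) : Eqv a b := by
  obtain ⟨a', ha, ha'⟩ := a.normalizesTo_nf.exists_eqv
  obtain ⟨b', hb, hb'⟩ := b.normalizesTo_nf.exists_eqv
  obtain rfl : a' = b' := Tm.raw_injective (by rw [ha', hb', h])
  exact .trans ha (.symm hb)

/-! ### Finite congruences on families -/

/-- An equivalence relation on families with finitely many classes, compatible with the operations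
that occur in reflection and reification, and depending only on finitely many entries. It is encoded
by the map `cls` to the finite set of classes. -/
structure FiniteCongruence (ν : Type) where
  card : ℕ
  cls : Fam ν → Fin card
  cls_app (A : Ty ν) {x x' y y' : Fam ν} : cls x = cls x' → cls y = cls y' →
    cls (.app A x y) = cls (.app A x' y')
  cls_updateLam (k : ℕ) {x x' y y' : Fam ν} : cls x = cls x' → cls y = cls y' →
    cls (.updateLam k x y) = cls (.updateLam k x' y')
  bound : ℕ
  cls_eq_of_eqOn {x y : Fam ν} : (∀ i < bound, x i = y i) → cls x = cls y

/-- The subterms of a raw term, each paired with the length of the context it is read in when the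
whole raw term is read in a context of length `n`. -/
def Raw.subterms : Raw ν → ℕ → Set (ℕ × Raw ν)
  | .var k, n => {(n, .var k)}
  | .app A s t, n => {(n, .app A s t)} ∪ (s.subterms n ∪ t.subterms n)
  | .lam t, n => {(n, .lam t)} ∪ t.subterms (n + 1)

theorem Raw.mem_subterms_self (t : Raw ν) (n : ℕ) : (n, t) ∈ t.subterms n := by
  cases t <;> simp [Raw.subterms]

theorem Raw.finite_subterms (t : Raw ν) (n : ℕ) : (t.subterms n).Finite := by
  induction t generalizing n with
  | var k => exact Set.finite_singleton _
  | app A s t ihs iht => exact (Set.finite_singleton _).union ((ihs n).union (iht n))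
  | lam t ih => exact (Set.finite_singleton _).union (ih _)

/-- Sets of raw terms, paired with lengths of contexts, that are closed under immediate subterms. -/
structure SubtermClosed (P : Set (ℕ × Raw ν)) : Prop where
  of_app {n : ℕ} {A : Ty ν} {s t : Raw ν} : (n, .app A s t) ∈ P → (n, s) ∈ P ∧ (n, t) ∈ P
  of_lam {n : ℕ} {t : Raw ν} : (n, .lam t) ∈ P → (n + 1, t) ∈ P

theorem SubtermClosed.union {P Q : Set (ℕ × Raw ν)} (hP : SubtermClosed P)
    (hQ : SubtermClosed Q) : SubtermClosed (P ∪ Q) where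
  of_app h := h.elim (fun h => (hP.of_app h).imp .inl .inl) fun h => (hQ.of_app h).imp .inr .inr
  of_lam := Or.imp hP.of_lam hQ.of_lam

theorem Raw.subtermClosed_subterms (t : Raw ν) (n : ℕ) : SubtermClosed (t.subterms n) := by
  induction t generalizing n with
  | var k => constructor <;> simp [Raw.subterms]
  | app A s t ihs iht =>
    have hst := (ihs n).union (iht n)
    constructor
    · rintro m B u v (h | h)
      · cases h
        exact ⟨.inr (.inl (s.mem_subterms_self n)), .inr (.inr (t.mem_subterms_self n))⟩
      · exact (hst.of_app h).imp .inr .inr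
    · rintro m u (h | h)
      · cases h
      · exact .inr (hst.of_lam h)
  | lam t ih =>
    constructor
    · rintro m B u v (h | h)
      · cases h
      · exact ((ih _).of_app h).imp .inr .inr
    · rintro m u (h | h)
      · cases h
        exact .inr (t.mem_subterms_self _)
      · exact .inr ((ih _).of_lam h)

/-- Two families are indistinguishable by `P` if their graphs meet `P` in the same set. -/
def Fam.Indist (P : Set (ℕ × Raw ν)) (x y : Fam ν) : Prop :=
  ∀ p ∈ P, x p.1 = p.2 ↔ y p.1 = p.2

theorem Fam.Indist.app {P : Set (ℕ × Raw ν)} (hP : SubtermClosed P) (A : Ty ν)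
    {x x' y y' : Fam ν} (hx : Indist P x x') (hy : Indist P y y') :
    Indist P (.app A x y) (.app A x' y') := by
  rintro ⟨n, r⟩ hr
  cases r with
  | app B s t =>
    have hs := hx _ (hP.of_app hr).1
    have ht := hy _ (hP.of_app hr).2
    simp only [Fam.app, Raw.app.injEq, hs, ht]
  | _ => simp [Fam.app]

theorem Fam.Indist.updateLam {P : Set (ℕ × Raw ν)} (hP : SubtermClosed P) (k : ℕ)
    {x x' y y' : Fam ν} (hx : Indist P x x') (hy : Indist P y y') :
    Indist P (.updateLam k x y) (.updateLam k x' y') := by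
  rintro ⟨n, r⟩ hr
  obtain rfl | hn := eq_or_ne n k
  · cases r with
    | lam t => simpa [Fam.updateLam] using hy _ (hP.of_lam hr)
    | _ => simp [Fam.updateLam]
  · simpa only [Fam.updateLam, Function.update_of_ne hn] using hx _ hr

theorem Fam.exists_fin_classifier {P : Set (ℕ × Raw ν)} (hP : P.Finite) :
    ∃ (n : ℕ) (cls : Fam ν → Fin n), ∀ x y, cls x = cls y ↔ Indist P x y := by
  have : Finite P := hP
  obtain ⟨n, ⟨φ⟩⟩ := Finite.exists_equiv_fin (Set P)
  refine ⟨n, fun x => φ {p | x p.1.1 = p.1.2}, fun x y => ?_⟩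
  simp [φ.injective.eq_iff, Set.ext_iff, Indist]

theorem FiniteCongruence.exists_separating {x y : Fam ν} (h : x ≠ y) :
    ∃ Q : FiniteCongruence ν, Q.cls x ≠ Q.cls y := by
  obtain ⟨m, hm⟩ := Function.ne_iff.1 h
  let P : Set (ℕ × Raw ν) := (x m).subterms m ∪ (y m).subterms m
  have closed : SubtermClosed P :=
    ((x m).subtermClosed_subterms m).union ((y m).subtermClosed_subterms m)
  have finite : P.Finite := ((x m).finite_subterms m).union ((y m).finite_subterms m)
  obtain ⟨n, cls, cls_eq_iff⟩ := Fam.exists_fin_classifier finite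
  obtain ⟨N, hN⟩ := (finite.image Prod.fst).bddAbove
  refine ⟨{ card := n, cls := cls, bound := N + 1,
            cls_app := fun A _ _ _ _ => ?_, cls_updateLam := fun k _ _ _ _ => ?_,
            cls_eq_of_eqOn := fun hxy => ?_ }, fun hxy => ?_⟩
  · simpa only [cls_eq_iff] using Fam.Indist.app closed A
  · simpa only [cls_eq_iff] using Fam.Indist.updateLam closed k
  · refine (cls_eq_iff _ _).2 fun p hp => ?_
    rw [hxy p.1 (Nat.lt_succ_of_le (hN ⟨p, hp, rfl⟩))]
  · have mem : (m, x m) ∈ P := .inl ((x m).mem_subterms_self m)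
    exact hm (((cls_eq_iff x y).1 hxy _ mem).1 rfl).symm

/-! ### Application and abstraction of several arguments of the same type -/

/-- Application to `n` arguments of type `C`. The `i`-th argument is the one bound by the `i`-th
innermost abstraction. -/
def Tm.appsN : (n : ℕ) → {B : Ty ν} → Tm Δ (Ty.arrs (List.replicate n C) B) → (Fin n → Tm Δ C) →
    Tm Δ B
  | 0, _, t, _ => t
  | n + 1, B, t, z => .app (Tm.appsN n (B := .arrow C B) t fun i => z i.succ) (z 0)

/-- Abstraction of the `n` most recent variables, all of type `C`. -/
def Tm.lamsN : (n : ℕ) → {B : Ty ν} → Tm (List.replicate n C ++ Γ) B →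
    Tm Γ (Ty.arrs (List.replicate n C) B)
  | 0, _, t => t
  | n + 1, B, t => Tm.lamsN n (B := .arrow C B) (.lam t)

/-- Extending a substitution with terms for the `n` most recent variables. -/
def Subst.consN : (n : ℕ) → (Fin n → Tm Δ C) → Subst Γ Δ → Subst (List.replicate n C ++ Γ) Δ
  | 0, _, s => s
  | n + 1, z, s => Subst.cons (z 0) (Subst.consN n (fun i => z i.succ) s)

/-- Weakening of a variable by `n` variables of type `C`. -/
def Var.wkN : (n : ℕ) → Var Γ A → Var (List.replicate n C ++ Γ) A
  | 0, v => v
  | n + 1, v => .vs (v.wkN n)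

/-- The `i`-th of the `n` most recent variables. -/
def Var.recent : (n : ℕ) → Fin n → Var (List.replicate n C ++ Γ) C
  | _ + 1, ⟨0, _⟩ => .vz
  | n + 1, ⟨i + 1, h⟩ => .vs (Var.recent n ⟨i, Nat.lt_of_succ_lt_succ h⟩)

theorem Subst.consN_wkN (n : ℕ) (z : Fin n → Tm Δ C) (s : Subst Γ Δ) (v : Var Γ A) :
    Subst.consN n z s A (v.wkN n) = s A v := by
  induction n with
  | zero => rfl
  | succ n ih => exact ih _

theorem Subst.consN_recent (n : ℕ) (z : Fin n → Tm Δ C) (s : Subst Γ Δ) (i : Fin n) :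
    Subst.consN n z s C (Var.recent n i) = z i := by
  induction n with
  | zero => exact i.elim0
  | succ n ih => cases i using Fin.cases with
    | zero => rfl
    | succ j => exact ih _ j

theorem Tm.subst_appsN (n : ℕ) (t : Tm Γ (Ty.arrs (List.replicate n C) B)) (z : Fin n → Tm Γ C)
    (s : Subst Γ Δ) : (t.appsN n z).subst s = (t.subst s).appsN n fun i => (z i).subst s := by
  induction n generalizing B with
  | zero => rfl
  | succ n ih => exact congrArg (Tm.app · _) (ih (B := .arrow C B) t _)

theorem Eqv.appsN (n : ℕ) {t u : Tm Δ (Ty.arrs (List.replicate n C) B)} {z w : Fin n → Tm Δ C}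
    (h : Eqv t u) (hz : ∀ i, Eqv (z i) (w i)) : Eqv (t.appsN n z) (u.appsN n w) := by
  induction n generalizing B with
  | zero => exact h
  | succ n ih => exact .congApp (ih (B := .arrow C B) h fun i => hz i.succ) (hz 0)

theorem Eqv.appsN_lamsN (n : ℕ) (b : Tm (List.replicate n C ++ Γ) B) (s : Subst Γ Δ)
    (z : Fin n → Tm Δ C) :
    Eqv (((b.lamsN n).subst s).appsN n z) (b.subst (Subst.consN n z s)) := by
  induction n generalizing B with
  | zero => exact .refl _
  | succ n ih => exact .trans (.congApp (ih (.lam b) _) (.refl _)) (.beta_subst b _ _)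

theorem Tm.exists_comp_appsN_eqv {n : ℕ} (r : Tm Δ (.arrow A (Ty.arrs (List.replicate n C) B)))
    (z : Fin n → Tm Δ C) :
    ∃ f : Tm Δ (.arrow A B), ∀ t, Eqv (.app f t) ((Tm.app r t).appsN n z) := by
  refine ⟨.lam (.appsN n (.app (r.rename fun _ => Var.vs) (.var .vz))
    fun i => (z i).rename fun _ => Var.vs), fun t => .trans (.beta _ _) (.of_eq ?_)⟩
  have weaken_subst1 {D : Ty ν} (u : Tm Δ D) : (u.rename fun _ => Var.vs).subst1 t = u :=
    (u.weaken_subst_cons t _).trans u.subst_var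
  refine (Tm.subst_appsN n _ _ _).trans ?_
  exact congrArg₂ (Tm.appsN n) (congrArg (Tm.app · t) (weaken_subst1 r))
    (funext fun i => weaken_subst1 (z i))

/-! ### Realizability by terms -/

/-- A notion of realizability of the elements of `α` by terms of type `A`, invariant under provable
equality. -/
structure Realizability (Δ : Ctx ν) (A : Ty ν) (α : Type) where
  Realizes : Tm Δ A → α → Prop
  congr {t u : Tm Δ A} {x : α} : Eqv t u → Realizes u x → Realizes t x

namespace Realizability

variable {α β γ δ : Type} {D : Ty ν}
  {R : Realizability Δ A α} {S : Realizability Δ B β} {T : Realizability Δ C γ}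
  {U : Realizability Δ D δ}

/-- The element `x` has a realizer. -/
def Realizable (R : Realizability Δ A α) (x : α) : Prop := ∃ t, R.Realizes t x

/-- A function is realized by the terms that send realizers of `x` to realizers of its value
at `x`. -/
def arrow (R : Realizability Δ A α) (S : Realizability Δ B β) :
    Realizability Δ (.arrow A B) (α → β) where
  Realizes t g := ∀ u x, R.Realizes u x → S.Realizes (.app t u) (g x)
  congr h ht u x hu := S.congr (.congApp h (.refl u)) (ht u x hu)

local infixr:60 " ⇒ " => Realizability.arrow

theorem Realizable.app {g : α → β} {x : α} (hg : (R ⇒ S).Realizable g) (hx : R.Realizable x) :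
    S.Realizable (g x) := by
  obtain ⟨f, hf⟩ := hg
  obtain ⟨t, ht⟩ := hx
  exact ⟨.app f t, hf t x ht⟩

theorem realizable_id : (R ⇒ R).Realizable fun x => x :=
  ⟨.lam (.var .vz), fun _ _ ht => R.congr (.beta _ _) ht⟩

theorem realizable_const : (R ⇒ S ⇒ R).Realizable fun x _ => x :=
  ⟨.lam (.lam (.var (.vs .vz))), fun _ _ ht u _ _ =>
    R.congr (.trans (.congApp (.beta _ _) (.refl u)) (.beta_subst _ _ _)) ht⟩

theorem realizable_ap : ((R ⇒ S ⇒ T) ⇒ (R ⇒ S) ⇒ R ⇒ T).Realizable fun f g x => f x (g x) := by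
  refine ⟨.lam (.lam (.lam (.app (.app (.var (.vs (.vs .vz))) (.var .vz))
    (.app (.var (.vs .vz)) (.var .vz))))), fun f F hf g G hg t x ht => ?_⟩
  refine T.congr ?_ (hf t x ht _ _ (hg t x ht))
  exact .trans (.congApp (.trans (.congApp (.beta _ _) (.refl g)) (.beta_subst _ _ _)) (.refl t))
    (.beta_subst _ _ _)

theorem Realizable.ap {f : α → β → γ} {g : α → β} (hf : (R ⇒ S ⇒ T).Realizable f)
    (hg : (R ⇒ S).Realizable g) : (R ⇒ T).Realizable fun x => f x (g x) :=
  (realizable_ap.app hf).app hg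

theorem Realizable.comp {f : β → γ} {g : α → β} (hf : (S ⇒ T).Realizable f)
    (hg : (R ⇒ S).Realizable g) : (R ⇒ T).Realizable fun x => f (g x) :=
  (realizable_const.app hf).ap hg

theorem Realizable.eval {x : α} (hx : R.Realizable x) :
    ((R ⇒ S) ⇒ S).Realizable fun g => g x :=
  realizable_id.ap (realizable_const.app hx)

theorem Realizable.comp_left {h : γ → δ} {f : α → β → γ} (hh : (T ⇒ U).Realizable h)
    (hf : (R ⇒ S ⇒ T).Realizable f) : (R ⇒ S ⇒ U).Realizable fun x y => h (f x y) :=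
  (realizable_ap.app (realizable_const.app hh)).comp hf

theorem Realizable.comp_right {h : β → γ} {f : α → γ → δ} (hf : (R ⇒ T ⇒ U).Realizable f)
    (hh : (S ⇒ T).Realizable h) : (R ⇒ S ⇒ U).Realizable fun x y => f x (h y) :=
  (realizable_ap.comp (realizable_const.comp hf)).ap (realizable_const.app hh)

/-- Realizability by selectors: a realizer of `x`, applied to `n` arguments, returns the argument
of index `cls x`. -/
def selector (Δ : Ctx ν) (C : Ty ν) {n : ℕ} (cls : α → Fin n) :
    Realizability Δ (Ty.arrs (List.replicate n C) C) α where
  Realizes t x := ∀ z : Fin n → Tm Δ C, Eqv (t.appsN n z) (z (cls x))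
  congr h hu z := .trans (.appsN n h fun _ => .refl _) (hu z)

theorem realizable_selector {n : ℕ} (cls : α → Fin n) (x : α) :
    (selector Δ C cls).Realizable x := by
  refine ⟨.lamsN n (.var (.recent n (cls x))), fun z => ?_⟩
  have h := Eqv.appsN_lamsN n (.var (.recent n (cls x))) (fun _ v => .var v : Subst Δ Δ) z
  rw [Tm.subst_var] at h
  exact h.trans (.of_eq (Subst.consN_recent n z _ _))

theorem exists_op_of_congr {cls : α → β} {F : α → α → α} (h : ∀ {x x' y y'}, cls x = cls x' →
    cls y = cls y' → cls (F x y) = cls (F x' y')) :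
    ∃ G : β → β → β, ∀ x y, cls (F x y) = G (cls x) (cls y) := by
  have factors : Function.FactorsThrough (fun p : α × α => cls (F p.1 p.2)) (Prod.map cls cls) :=
    fun _ _ hp => h (Prod.ext_iff.1 hp).1 (Prod.ext_iff.1 hp).2
  exact ⟨fun i j => Function.extend (Prod.map cls cls) (fun p => cls (F p.1 p.2)) Prod.fst (i, j),
    fun x y => (factors.extend_apply Prod.fst (x, y)).symm⟩

-- The realizer is `λ t u z. t (λ i. u (λ j. z (G i j)))`, with tuples of arguments indexed by
-- `i` and `j` in place of the inner abstractions.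
theorem realizable_selector_op {n : ℕ} {cls : α → Fin n} {F : α → α → α}
    (hF : ∀ {x x' y y'}, cls x = cls x' → cls y = cls y' → cls (F x y) = cls (F x' y')) :
    (selector Δ C cls ⇒ selector Δ C cls ⇒ selector Δ C cls).Realizable F := by
  obtain ⟨G, hG⟩ := exists_op_of_congr (cls := cls) (F := F) hF
  let selTy := Ty.arrs (List.replicate n C) C
  let row (i : Fin n) : Tm (List.replicate n C ++ (selTy :: selTy :: Δ)) C :=
    .appsN n (.var (.wkN n .vz)) fun j => .var (.recent n (G i j))
  refine ⟨.lam (.lam (.lamsN n (.appsN n (.var (.wkN n (.vs .vz))) row))),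
    fun t x ht u y hu z => ?_⟩
  let s := Subst.consN n z (Subst.cons u (Subst.cons t fun _ v => .var v))
  have row_eqv (i : Fin n) : Eqv ((row i).subst s) (z (G i (cls y))) := by
    rw [Tm.subst_appsN]
    refine .trans (.appsN n (.of_eq (Subst.consN_wkN n z _ _)) fun j => .of_eq ?_)
      (hu fun j => z (G i j))
    exact Subst.consN_recent n z _ (G i j)
  have body_eqv : Eqv ((Tm.appsN n (.var (.wkN n (.vs .vz))) row).subst s) (z (cls (F x y))) := by
    rw [Tm.subst_appsN, hG]
    refine .trans (.appsN n (.of_eq (Subst.consN_wkN n z _ _)) row_eqv) ?_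
    exact ht fun i => z (G i (cls y))
  refine .trans (.appsN n (.trans (.congApp (.beta _ _) (.refl u)) (.beta_subst _ _ _))
    fun _ => .refl _) ?_
  exact .trans (.appsN_lamsN n _ _ _) body_eqv

theorem Realizable.of_cls_eq {n : ℕ} {cls : β → Fin n} {f g : α → β}
    (hf : (R ⇒ selector Δ C cls).Realizable f) (h : ∀ x, cls (f x) = cls (g x)) :
    (R ⇒ selector Δ C cls).Realizable g :=
  hf.imp fun _ ht u x hu z => h x ▸ ht u x hu z

end Realizability

/-! ### Definability of normalization modulo a finite congruence -/

/-- The entries of a family below `k`, continued by a fixed raw term. -/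
def Fam.truncate (k : ℕ) (x : Fam ν) : Fam ν := fun i => if i < k then x i else .var 0

theorem Fam.truncate_succ_reify (k : ℕ) (g : A.Sem → B.Sem) :
    Fam.truncate (k + 1) (Ty.reify (.arrow A B) g) =
      .updateLam k (Fam.truncate k (Ty.reify (.arrow A B) g))
        (B.reify (g (A.reflect (.var k)))) := by
  funext i
  obtain rfl | hi := eq_or_ne i k
  · simp [Fam.truncate, Fam.updateLam, Ty.reify]
  · simp [Fam.truncate, Fam.updateLam, hi, hi.le_iff_lt]

namespace FiniteCongruence

open Realizability

variable (Q : FiniteCongruence ν)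

local infixr:60 " ⇒ " => Realizability.arrow

/-- The type of selectors among the classes of `Q`. -/
abbrev selectorTy (C : Ty ν) : Ty ν := Ty.arrs (List.replicate Q.card C) C

/-- The logical relation between the model and terms of types in which all atomic types have been
replaced by the type of selectors: families are realized by the selectors of their classes. -/
def realizability (Δ : Ctx ν) (C : Ty ν) :
    (A : Ty ν) → Realizability Δ (A.substA fun _ => Q.selectorTy C) A.Sem
  | .atom _ => selector Δ C Q.cls
  | .arrow A B => realizability Δ C A ⇒ realizability Δ C B

theorem realizes_eval (t : Tm Γ A)
    {s : Subst (Γ.map (Ty.substA fun _ => Q.selectorTy C)) Δ} {η : Env Γ}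
    (h : ∀ (B : Ty ν) (v : Var Γ B),
      (Q.realizability Δ C B).Realizes (s _ (v.substA _)) (η B v)) :
    (Q.realizability Δ C A).Realizes ((t.substA fun _ => Q.selectorTy C).subst s) (t.eval η) := by
  induction t with
  | var v => exact h _ v
  | app _ _ ihf iha => exact ihf h _ _ (iha h)
  | lam b ih =>
    intro u x hu
    refine Realizability.congr _ (.beta_subst _ s u) (ih (s := Subst.cons u s) fun B v => ?_)
    cases v with
    | vz => exact hu
    | vs w => exact h _ w

theorem exists_realizing_subst (η : Env Γ)
    (h : ∀ (B : Ty ν) (v : Var Γ B), (Q.realizability Δ C B).Realizable (η B v)) :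
    ∃ s : Subst (Γ.map (Ty.substA fun _ => Q.selectorTy C)) Δ, ∀ (B : Ty ν) (v : Var Γ B),
      (Q.realizability Δ C B).Realizes (s _ (v.substA _)) (η B v) := by
  induction Γ with
  | nil => exact ⟨fun _ v => v.elim0, fun _ v => v.elim0⟩
  | cons A Γ ih =>
    obtain ⟨t, ht⟩ := h A .vz
    obtain ⟨s, hs⟩ := ih (fun B v => η B (.vs v)) fun B v => h B (.vs v)
    refine ⟨Subst.cons t s, fun B v => ?_⟩
    cases v with
    | vz => exact ht
    | vs w => exact hs _ w

theorem realizable_truncate_reify_arrow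
    (hA : (selector Δ C Q.cls ⇒ Q.realizability Δ C A).Realizable A.reflect)
    (hB : (Q.realizability Δ C B ⇒ selector Δ C Q.cls).Realizable B.reify) (k : ℕ) :
    (Q.realizability Δ C (.arrow A B) ⇒ selector Δ C Q.cls).Realizable
      fun g => Fam.truncate k (Ty.reify (.arrow A B) g) := by
  induction k with
  | zero => exact realizable_const.app (realizable_selector Q.cls (Fam.var 0))
  | succ k ih =>
    have var_realizable := hA.app (realizable_selector Q.cls (Fam.var k))
    have updateLam_realizable :
        (selector Δ C Q.cls ⇒ selector Δ C Q.cls ⇒ selector Δ C Q.cls).Realizable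
          (Fam.updateLam k) := realizable_selector_op (Q.cls_updateLam k)
    exact ((updateLam_realizable.comp ih).ap (hB.comp var_realizable.eval)).of_cls_eq
      fun g => congrArg Q.cls (Fam.truncate_succ_reify k g).symm

theorem realizable_reflect_and_reify (A : Ty ν) :
    (selector Δ C Q.cls ⇒ Q.realizability Δ C A).Realizable A.reflect ∧
    (Q.realizability Δ C A ⇒ selector Δ C Q.cls).Realizable A.reify := by
  induction A with
  | atom p => exact ⟨realizable_id, realizable_id⟩
  | arrow A B ihA ihB =>
    constructor
    · exact ihB.1.comp_left ((realizable_selector_op (Q.cls_app A)).comp_right ihA.2)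
    · refine (Q.realizable_truncate_reify_arrow ihA.1 ihB.2 Q.bound).of_cls_eq fun g => ?_
      exact Q.cls_eq_of_eqOn fun i hi => if_pos hi

theorem exists_subst_appsN_eqv (Δ : Ctx ν) (C : Ty ν) (Γ : Ctx ν) (A : Ty ν) :
    ∃ (s : Subst (Γ.map (Ty.substA fun _ => Q.selectorTy C)) Δ)
      (r : Tm Δ (.arrow (A.substA fun _ => Q.selectorTy C) (Q.selectorTy C))),
      ∀ (t : Tm Γ A) (z : Fin Q.card → Tm Δ C),
        Eqv ((Tm.app r ((t.substA _).subst s)).appsN Q.card z) (z (Q.cls t.nf)) := by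
  obtain ⟨s, hs⟩ := Q.exists_realizing_subst (Δ := Δ) (C := C) (Env.generic Γ) fun B v =>
    (Q.realizable_reflect_and_reify B).1.app (realizable_selector Q.cls (Fam.var v.level))
  obtain ⟨r, hr⟩ := (Q.realizable_reflect_and_reify (Δ := Δ) (C := C) A).2
  exact ⟨s, r, fun t => hr _ _ (Q.realizes_eval t hs)⟩

end FiniteCongruence

/-! ### Separation -/

theorem Tm.exists_separating {a b : Tm Γ A} (h : ¬ Eqv a b) (c d : Tm Δ C) :
    ∃ (σ : ν → Ty ν) (s : Subst (Γ.map (Ty.substA σ)) Δ) (f : Tm Δ (.arrow (A.substA σ) C)),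
      Eqv (.app f ((a.substA σ).subst s)) c ∧ Eqv (.app f ((b.substA σ).subst s)) d := by
  obtain ⟨Q, hQ⟩ := FiniteCongruence.exists_separating (mt Eqv.of_nf_eq h)
  obtain ⟨s, r, hr⟩ := Q.exists_subst_appsN_eqv Δ C Γ A
  let z : Fin Q.card → Tm Δ C := Function.update (fun _ => d) (Q.cls a.nf) c
  have za : z (Q.cls a.nf) = c := Function.update_self ..
  have zb : z (Q.cls b.nf) = d := Function.update_of_ne hQ.symm ..
  obtain ⟨f, hf⟩ := Tm.exists_comp_appsN_eqv r z
  exact ⟨_, s, f, .trans (hf _) (za ▸ hr a z), .trans (hf _) (zb ▸ hr b z)⟩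

end

/--
**Maximality Corollary.** If `a = b` is not provable in Λ, then in Λ extended with
`a = b` as a new axiom schema one can prove every formula `c = d`.
-/
theorem maximality_lambda {ν : Type} [Nonempty ν] {Γ : Ctx ν} {A : Ty ν}
    (a b : Tm Γ A) (hne : ¬ Eqv a b) {Δ : Ctx ν} {C : Ty ν} (c d : Tm Δ C) :
    EqvExt a b c d := by
  obtain ⟨σ, s, f, hc, hd⟩ := Tm.exists_separating hne c d
  have h : EqvExt a b (.app f ((a.substA σ).subst s)) (.app f ((b.substA σ).subst s)) :=
    .congApp (.refl f) (.ax σ s)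
  exact .trans (.symm hc.toEqvExt) (.trans h hd.toEqvExt)
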